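/- Let G be a distribution function on ℝ whose integrated tail distribution G^s is long-tailed. Then Ḡ(y) = o(Ḡ^s(y)) as y → ∞. -/

import Mathlib

open MeasureTheory ProbabilityTheory Filter Set

noncomputable section

/-- The (upper) tail `H̄(y) = μ((y,∞))` of a (probability) measure on `ℝ`. -/
def mtail (μ : Measure ℝ) (y : ℝ) : ℝ := (μ (Set.Ioi y)).toReal

/-- The integrated (second-tail) distribution tail `H̄ˢ(y) = min(1, ∫_y^∞ H̄(t) dt)`. -/
def mtailInt (μ : Measure ℝ) (y : ℝ) : ℝ := min 1 (∫ t in Set.Ioi y, mtail μ t)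

/-- Convolution of two measures on `ℝ` (the distribution of a sum of independent r.v.s). -/
def mconv (μ ν : Measure ℝ) : Measure ℝ := Measure.map (fun p : ℝ × ℝ => p.1 + p.2) (μ.prod ν)

/-- A distribution on `ℝ₊` is subexponential if its tail is everywhere positive and
`H̄^{*2}(y)/H̄(y) → 2` as `y → ∞`. -/
def Subexp (μ : Measure ℝ) : Prop :=
  (∀ y, 0 < mtail μ y) ∧
  Tendsto (fun y => mtail (mconv μ μ) y / mtail μ y) atTop (nhds 2)

/-- A tail function `f` is long-tailed if it is everywhere positive and
`f(y+z)/f(y) → 1` as `y → ∞` for every fixed `z > 0`. -/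
def LongTailedFun (f : ℝ → ℝ) : Prop :=
  (∀ y, 0 < f y) ∧ ∀ z > 0, Tendsto (fun y => f (y + z) / f y) atTop (nhds 1)

/-- The probability measure on `ℝ` whose distribution function is the integrated-tail
distribution `Hˢ`, i.e. whose tail is `H̄ˢ(y) = min(1, ∫_y^∞ H̄(t) dt)`. -/
def intTailMeasure (μ : Measure ℝ) : Measure ℝ :=
  (volume.restrict {t : ℝ | ∫ s in Set.Ioi t, mtail μ s < 1}).withDensity
    (fun t => ENNReal.ofReal (mtail μ t))

/-- The integrated-tail distribution `Hˢ` is subexponential. -/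
def SubexpIntTail (μ : Measure ℝ) : Prop := Subexp (intTailMeasure μ)

/-- The `n`-th regeneration cycle `Z_n = (τ_n; X_{T_{n-1}+1}, …, X_{T_n})` of a process `X`
with regeneration times `T`, encoded as the cycle length together with the (padded) cycle
path. -/
def cycle {Ω 𝒳 : Type*} (X : ℕ → Ω → 𝒳) (T : ℕ → Ω → ℕ) (n : ℕ) (ω : Ω) :
    ℕ × (ℕ → 𝒳 ⊕ Unit) :=
  let start : ℕ := if n = 0 then 0 else T (n - 1) ω
  (T n ω - start,
   fun i => if i < T n ω - start then Sum.inl (X (start + 1 + i) ω) else Sum.inr ())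

/-!
Write `I y` for the integral of the tail over `(y, ∞)`. Since the tail decreases, its value at `y`
is at most its integral over `(y - 1, y]`, which is `I (y - 1) - I y`. Long-tailedness of `I` makes
this increment negligible compared with `I y`, and truncating `I` at `1` does not matter once
`I` has dropped below `1`.
-/

open Asymptotics Topology

theorem LongTailedFun.isEquivalent_comp_add {f : ℝ → ℝ} (hf : LongTailedFun f) {z : ℝ}
    (hz : 0 < z) : (fun y => f (y + z)) ~[atTop] f :=
  isEquivalent_of_tendsto_one (hf.2 z hz)

theorem LongTailedFun.sub_isLittleO {f : ℝ → ℝ} (hf : LongTailedFun f) {z : ℝ} (hz : 0 < z) :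
    (fun y => f (y - z) - f y) =o[atTop] f := by
  have hshift : Tendsto (fun y : ℝ => y - z) atTop atTop :=
    tendsto_atTop_add_const_right atTop (-z) tendsto_id
  have hequiv : (fun y => f (y - z)) ~[atTop] f := by
    simpa only [Function.comp_def, sub_add_cancel] using
      ((hf.isEquivalent_comp_add hz).comp_tendsto hshift).symm
  exact hequiv.isLittleO

theorem tendsto_setIntegral_Ioi_atTop_zero {α E : Type*} [LinearOrder α] [TopologicalSpace α]
    [OrderClosedTopology α] [MeasurableSpace α] [OpensMeasurableSpace α]
    [(atTop : Filter α).IsCountablyGenerated] [NormedAddCommGroup E] [NormedSpace ℝ E]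
    {μ : Measure α} {f : α → E} {a : α} (hf : IntegrableOn f (Ioi a) μ) :
    Tendsto (fun y => ∫ x in Ioi y, f x ∂μ) atTop (𝓝 0) := by
  have hempty : ⋂ y : α, Ioi y = ∅ :=
    eq_empty_of_forall_notMem fun x hx => lt_irrefl x (mem_iInter.1 hx x)
  simpa only [hempty, setIntegral_empty] using
    tendsto_setIntegral_of_antitone (fun _ => measurableSet_Ioi)
      (fun _ _ hyz => Ioi_subset_Ioi hyz) ⟨a, hf⟩

theorem nonneg_of_antitone_of_integrableOn_Ioi {f : ℝ → ℝ} (hf : Antitone f) {a : ℝ}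
    (hint : IntegrableOn f (Ioi a)) (x : ℝ) : 0 ≤ f x := by
  by_contra! hneg
  have hconst : IntegrableOn (fun _ => f x) (Ioi (max a x)) := by
    refine Integrable.mono (hint.mono_set (Ioi_subset_Ioi (le_max_left a x)))
      aestronglyMeasurable_const ?_
    filter_upwards [ae_restrict_mem measurableSet_Ioi] with t ht
    have hle : f t ≤ f x := hf ((le_max_right a x).trans ht.le)
    simpa only [Real.norm_of_nonpos hneg.le, Real.norm_of_nonpos (hle.trans hneg.le),
      neg_le_neg_iff] using hle
  simp [integrableOn_const_iff, hneg.ne] at hconst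

theorem sub_mul_le_intervalIntegral_of_antitoneOn {f : ℝ → ℝ} {a b : ℝ} (hab : a ≤ b)
    (hf : AntitoneOn f (Icc a b)) : (b - a) * f b ≤ ∫ x in a..b, f x := by
  have hint : IntervalIntegrable f volume a b :=
    AntitoneOn.intervalIntegrable (by rwa [uIcc_of_le hab])
  calc (b - a) * f b = ∫ _ in a..b, f b := by
        rw [intervalIntegral.integral_const, smul_eq_mul]
    _ ≤ ∫ x in a..b, f x :=
        intervalIntegral.integral_mono_on hab intervalIntegrable_const hint
          fun x hx => hf hx (right_mem_Icc.2 hab) hx.2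

theorem isBigO_integral_Ioi_sub_of_antitone {f : ℝ → ℝ} (hf : Antitone f) {a : ℝ}
    (hint : IntegrableOn f (Ioi a)) {z : ℝ} (hz : 0 < z) :
    f =O[atTop] fun y => (∫ t in Ioi (y - z), f t) - ∫ t in Ioi y, f t := by
  refine .of_bound z⁻¹ ?_
  filter_upwards [eventually_ge_atTop (a + z)] with y hy
  have hint_shift : IntegrableOn f (Ioi (y - z)) :=
    hint.mono_set (Ioi_subset_Ioi (le_sub_iff_add_le.2 hy))
  have hle : y - z ≤ y := sub_le_self y hz.le
  have hbound : z * f y ≤ (∫ t in Ioi (y - z), f t) - ∫ t in Ioi y, f t := by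
    simpa only [sub_sub_cancel, intervalIntegral.integral_Ioi_sub_Ioi hint_shift hle] using
      sub_mul_le_intervalIntegral_of_antitoneOn hle (hf.antitoneOn _)
  rw [Real.norm_of_nonneg (nonneg_of_antitone_of_integrableOn_Ioi hf hint y),
    le_inv_mul_iff₀ hz]
  exact hbound.trans (Real.le_norm_self _)

theorem antitone_mtail (μ : Measure ℝ) [IsFiniteMeasure μ] : Antitone (mtail μ) :=
  fun _ _ hab => measureReal_mono (Ioi_subset_Ioi hab)

theorem statement12_general {f : ℝ → ℝ} (hf : Antitone f)
    (hlong : LongTailedFun fun y => min 1 (∫ t in Ioi y, f t)) :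
    f =o[atTop] fun y => min 1 (∫ t in Ioi y, f t) := by
  -- A non-integrable tail has Bochner integral `0`, which positivity excludes.
  have hint (y : ℝ) : IntegrableOn f (Ioi y) :=
    .of_integral_ne_zero (lt_min_iff.1 (hlong.1 y)).2.ne'
  have hmin : ∀ᶠ y in atTop, min 1 (∫ t in Ioi y, f t) = ∫ t in Ioi y, f t :=
    ((tendsto_setIntegral_Ioi_atTop_zero (hint 0)).eventually_le_const one_pos).mono
      fun _ => min_eq_right
  have hmin_shift : ∀ᶠ y in atTop, min 1 (∫ t in Ioi (y - 1), f t) = ∫ t in Ioi (y - 1), f t :=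
    (tendsto_atTop_add_const_right atTop (-1) tendsto_id).eventually hmin
  refine ((isBigO_integral_Ioi_sub_of_antitone hf (hint 0) one_pos).congr' .rfl ?_).trans_isLittleO
    (hlong.sub_isLittleO one_pos)
  filter_upwards [hmin, hmin_shift] with y hy hy_shift
  exact congrArg₂ (· - ·) hy_shift.symm hy.symm

/-- **Property 3, first part.**  If the integrated tail distribution `Gˢ` of `G` is
long-tailed, then `Ḡ(y) = o(Ḡˢ(y))` as `y → ∞`. -/
theorem statement12
    (G : Measure ℝ) [IsProbabilityMeasure G]
    (hlong : LongTailedFun (mtailInt G)) :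
    (fun y => mtail G y) =o[atTop] fun y => mtailInt G y :=
  statement12_general (antitone_mtail G) hlong
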